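/- Every valuation on E is adapted to some frame: for every valuation v : E → ℝ ∪ {∞} there exists a frame L = (L₁, …, L_r) for E such that every subspace E_{v≥a}, a ∈ ℝ, is a sum of some of the L_i (equivalently, v(e) = min{v(e_i) : e_i ≠ 0} for every e ≠ 0, where e = Σᵢ e_i with e_i ∈ L_i). -/

import Mathlib

/-- A valuation on a `K`-vector space `E` with values in `ℝ ∪ {∞}`. -/
def IsVSValuation (K : Type*) {E : Type*} [Field K] [AddCommGroup E] [Module K E]
    (v : E → WithTop ℝ) : Prop :=
  (∀ (c : K) (e : E), c ≠ 0 → v (c • e) = v e) ∧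
  (∀ e₁ e₂ : E, min (v e₁) (v e₂) ≤ v (e₁ + e₂)) ∧
  (∀ e : E, v e = ⊤ ↔ e = 0)

/-- A frame for `E`: a family of one-dimensional subspaces whose internal direct sum is `E`. -/
def IsFrame (K : Type*) {E : Type*} [Field K] [AddCommGroup E] [Module K E]
    {r : ℕ} (L : Fin r → Submodule K E) : Prop :=
  (∀ i, Module.finrank K (L i) = 1) ∧ iSupIndep L ∧ (⨆ i, L i) = ⊤

/-- A valuation `v` is adapted to a frame `L` if every subspace `E_{v ≥ t}`, `t ∈ ℝ`,
is a sum of some of the `L i`. -/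
def IsAdapted {K E : Type*} [Field K] [AddCommGroup E] [Module K E]
    {r : ℕ} (v : E → WithTop ℝ) (L : Fin r → Submodule K E) : Prop :=
  ∀ t : ℝ, ∃ s : Finset (Fin r),
    {e : E | (t : WithTop ℝ) ≤ v e} = ((⨆ i ∈ s, L i : Submodule K E) : Set E)

/-!
Well-order `E` so that vectors of larger value come first, and keep the vectors that do not lie in
the span of their predecessors, as in Gaussian elimination. They form a basis whose members inside
any initial segment span that segment; since every `E_{v ≥ t}` is an initial segment, the lines
through this basis form an adapted frame. A well-order of this kind exists as soon as values cannot
increase forever, and in finite dimension they cannot, because a larger value gives a strictly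
smaller subspace.
-/

open Module Set Submodule

section Pivots

variable (K : Type*) {E ι : Type*} [DivisionRing K] [AddCommGroup E] [Module K E]

/-- The pivots of an ordered family `f` of vectors: the indices `i` for which `f i` is not a linear
combination of the earlier vectors. For well-ordered indices the vectors at the pivots form a basis
of the span of `f`, as the pivot columns of a matrix do for its column space. -/
def pivots [Preorder ι] (f : ι → E) : Set ι :=
  {i | f i ∉ span K (f '' Iio i)}

variable {K} [LinearOrder ι]

theorem linearIndepOn_pivots (f : ι → E) : LinearIndepOn K f (pivots K f) := by
  classical
  rw [linearIndepOn_iff_linearIndepOn_finset]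
  intro t
  induction t using Finset.induction_on_max with
  | empty => simp
  | insert i t hlt ih =>
    intro ht
    rw [Finset.coe_insert, insert_subset_iff] at ht
    rw [Finset.coe_insert]
    exact (ih ht.2).insert fun hi => ht.1 (span_mono (image_mono hlt) hi)

theorem span_image_pivots_inter [WellFoundedLT ι] (f : ι → E) {s : Set ι} (hs : IsLowerSet s) :
    span K (f '' (pivots K f ∩ s)) = span K (f '' s) := by
  refine le_antisymm (span_mono (image_mono inter_subset_right)) (span_le.2 ?_)
  rintro _ ⟨i, hi, rfl⟩
  induction i using WellFoundedLT.induction with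
  | ind i ih =>
    by_cases hpivot : i ∈ pivots K f
    · exact subset_span (mem_image_of_mem f ⟨hpivot, hi⟩)
    · have hspan : f i ∈ span K (f '' Iio i) := not_not.1 hpivot
      refine span_le.2 ?_ hspan
      rintro _ ⟨j, hj, rfl⟩
      exact ih j hj (hs (le_of_lt hj) hi)

end Pivots

theorem exists_basis_forall_isLowerSet_span_range_inter {K E ι : Type*} [DivisionRing K]
    [AddCommGroup E] [Module K E] [LinearOrder E] [WellFoundedLT E] (b₀ : Basis ι K E) :
    ∃ b : Basis ι K E, ∀ s : Set E, IsLowerSet s → span K (range b ∩ s) = span K s := by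
  have hspan {s : Set E} (hs : IsLowerSet s) : span K (pivots K id ∩ s) = span K s := by
    simpa only [image_id] using span_image_pivots_inter (K := K) id hs
  have htop : ⊤ ≤ span K (range ((↑) : pivots K (id : E → E) → E)) := by
    simpa using (hspan isLowerSet_univ).ge
  let b := Basis.mk (linearIndepOn_pivots id) htop
  have hrange : range b = pivots K id := by
    simp [b]
  refine ⟨b.reindex (b.indexEquiv b₀), fun s hs => ?_⟩
  rw [b.range_reindex, hrange, hspan hs]

/-- A semivaluation on `E`: a valuation which, like a seminorm as opposed to a norm, may take the
value `⊤` at nonzero vectors. The values lie in any linear order `Γ` with greatest element, in place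
of `ℝ ∪ {∞}`. -/
structure IsSemivaluation (K : Type*) {E Γ : Type*} [DivisionRing K] [AddCommGroup E] [Module K E]
    [LinearOrder Γ] [OrderTop Γ] (v : E → Γ) : Prop where
  map_smul : ∀ (c : K) (e : E), c ≠ 0 → v (c • e) = v e
  min_le_map_add : ∀ e₁ e₂ : E, min (v e₁) (v e₂) ≤ v (e₁ + e₂)
  map_zero : v 0 = ⊤

theorem IsVSValuation.isSemivaluation {K E : Type*} [Field K] [AddCommGroup E] [Module K E]
    {v : E → WithTop ℝ} (hv : IsVSValuation K v) : IsSemivaluation K v :=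
  ⟨hv.1, hv.2.1, (hv.2.2 0).2 rfl⟩

namespace IsSemivaluation

variable {K E Γ : Type*} [DivisionRing K] [AddCommGroup E] [Module K E] [LinearOrder Γ] [OrderTop Γ]
  {v : E → Γ}

/-- The subspace `E_{v ≥ t}` of vectors of value at least `t`. -/
def superlevel (hv : IsSemivaluation K v) (t : Γ) : Submodule K E where
  carrier := {e | t ≤ v e}
  add_mem' ha hb := (le_min ha hb).trans (hv.min_le_map_add _ _)
  zero_mem' := le_top.trans_eq hv.map_zero.symm
  smul_mem' c e he := by
    obtain rfl | hc := eq_or_ne c 0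
    · simp [hv.map_zero]
    · exact he.trans_eq (hv.map_smul c e hc).symm

theorem superlevel_lt_superlevel (hv : IsSemivaluation K v) {x y : E} (h : v y < v x) :
    hv.superlevel (v x) < hv.superlevel (v y) :=
  SetLike.lt_iff_le_and_exists.2 ⟨fun _ he => h.le.trans he, y, le_rfl, h.not_ge⟩

theorem wellFounded_of_isArtinian [IsArtinian K E] (hv : IsSemivaluation K v) :
    WellFounded fun x y : E => v y < v x :=
  Subrelation.wf (fun h => hv.superlevel_lt_superlevel h)
    (InvImage.wf (fun x => hv.superlevel (v x)) wellFounded_lt)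

theorem exists_basis_forall_span_range_inter_superlevel (hv : IsSemivaluation K v)
    (hwf : WellFounded fun x y : E => v y < v x) {ι : Type*} (b₀ : Basis ι K E) :
    ∃ b : Basis ι K E, ∀ t, span K (range b ∩ hv.superlevel t) = hv.superlevel t := by
  have : IsWellFounded E fun x y => v y < v x := ⟨hwf⟩
  obtain ⟨r, hvr, _⟩ := IsWellFounded.exists_well_order_ge fun x y : E => v y < v x
  classical
  let _ : LinearOrder E := linearOrderOfSTO r
  have : WellFoundedLT E := ⟨IsWellFounded.wf (r := r)⟩
  have hanti {x y : E} (hxy : x ≤ y) : v y ≤ v x :=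
    le_of_not_gt fun h => hxy.not_gt (hvr y x h)
  obtain ⟨b, hb⟩ := exists_basis_forall_isLowerSet_span_range_inter b₀
  refine ⟨b, fun t => ?_⟩
  have hlower : IsLowerSet (hv.superlevel t : Set E) := fun _ _ hyx hx => le_trans hx (hanti hyx)
  rw [hb _ hlower, span_eq]

end IsSemivaluation

theorem stmt6_general {K E Γ ι : Type*} [DivisionRing K] [AddCommGroup E] [Module K E]
    [LinearOrder Γ] [OrderTop Γ] {v : E → Γ} (hv : IsSemivaluation K v)
    (hwf : WellFounded fun x y : E => v y < v x) (b₀ : Basis ι K E) :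
    ∃ L : ι → Submodule K E,
      ((∀ i, finrank K (L i) = 1) ∧ iSupIndep L ∧ (⨆ i, L i) = ⊤) ∧
      ∀ t : Γ, ∃ s : Set ι, {e : E | t ≤ v e} = ((⨆ i ∈ s, L i : Submodule K E) : Set E) := by
  obtain ⟨b, hb⟩ := hv.exists_basis_forall_span_range_inter_superlevel hwf b₀
  refine ⟨fun i => span K {b i}, ⟨fun i => finrank_span_singleton (b.ne_zero i),
    b.linearIndependent.iSupIndep_span_singleton, ?_⟩, fun t => ⟨b ⁻¹' hv.superlevel t, ?_⟩⟩
  · rw [← span_range_eq_iSup, b.span_eq]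
  · have hsum : ⨆ i ∈ b ⁻¹' hv.superlevel t, span K {b i} = hv.superlevel t := by
      rw [← iSup_image (g := fun x => span K {x}), image_preimage_eq_range_inter,
        ← span_eq_iSup_of_singleton_spans, hb t]
    rw [hsum]
    rfl

/-- Every valuation on a finite-dimensional vector space `E` is adapted to some frame. -/
theorem stmt6 (K E : Type*) [Field K] [AddCommGroup E] [Module K E] [FiniteDimensional K E]
    (v : E → WithTop ℝ) (hv : IsVSValuation K v) :
    ∃ L : Fin (Module.finrank K E) → Submodule K E, IsFrame K L ∧ IsAdapted v L := by
  obtain ⟨L, hL, h⟩ := stmt6_general hv.isSemivaluation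
    hv.isSemivaluation.wellFounded_of_isArtinian (finBasis K E)
  exact ⟨L, hL, fun t => let ⟨s, hs⟩ := h t; ⟨s.toFinite.toFinset, by simpa using hs⟩⟩
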